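/- In a multi-triangulated planar graph G, a pair of vertices {u,v} is a cutting pair with exactly L cut-components if and only if (u,v) is an edge of multiplicity L ≥ 2. -/

import Mathlib

/-- A multi-triangulated planar multi-graph, encoded as a connected combinatorial map
(rotation system): darts `D` with an edge-involution `rev` (no fixed points, no loops),
a rotation `rot` whose orbits are the darts around each vertex, all faces (orbits of
`rot ∘ rev`) being triangles, and Euler's formula `|V| - |E| + |F| = 2` certifying a
planar (genus 0) embedding. -/
structure MultiTriangulation (V : Type*) [Fintype V] where
  /-- the darts (half-edges) -/
  D : Type
  [fintypeD : Fintype D]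
  /-- the vertex at which a dart is based -/
  head : D → V
  /-- the opposite dart of the same edge -/
  rev : D → D
  rev_rev : ∀ d, rev (rev d) = d
  /-- no loops -/
  no_loops : ∀ d, head (rev d) ≠ head d
  /-- the rotation: cyclic order of the darts around each vertex -/
  rot : Equiv.Perm D
  rot_head : ∀ d, head (rot d) = head d
  rot_cyclic : ∀ d d', head d = head d' → ∃ n : ℕ, (rot ^ n) d = d'
  /-- every vertex carries some dart -/
  covers : ∀ v : V, ∃ d, head d = v
  /-- the underlying multi-graph is connected -/
  conn : ∀ u v : V,
    Relation.ReflTransGen (fun a b => ∃ d, head d = a ∧ head (rev d) = b) u v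
  /-- every face is a triangle: the face permutation `rot ∘ rev` has order dividing 3 … -/
  face_tri : ∀ d, rot (rev (rot (rev (rot (rev d))))) = d
  /-- … and no fixed points, so every facial circuit has exactly three edges -/
  face_ne : ∀ d, rot (rev d) ≠ d
  /-- Euler's formula `|V| + |F| = 2 + |E|`: the embedding has genus 0, i.e. is planar -/
  euler : Fintype.card V + Fintype.card D / 3 = 2 + Fintype.card D / 2

/-- The underlying simple graph of a multi-triangulation. -/
def MultiTriangulation.graph {V : Type*} [Fintype V] (M : MultiTriangulation V) :
    SimpleGraph V :=
  SimpleGraph.fromRel (fun u v => ∃ d, M.head d = u ∧ M.head (M.rev d) = v)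

attribute [local instance] MultiTriangulation.fintypeD

namespace MTaux

theorem lin {D W A : Type*} [Fintype D] [AddCommGroup W] [Module ℝ W] [AddCommGroup A] [Module ℝ A]
    (T : A →ₗ[ℝ] (D → ℝ)) (P : W →ₗ[ℝ] (D → ℝ))
    (h : ∀ a w, ∑ e, T a e * P w e = 0)
    (hd : Fintype.card D ≤ Module.finrank ℝ (LinearMap.range T) + Module.finrank ℝ (LinearMap.range P))
    (g : D → ℝ) (hg : ∀ w, ∑ e, g e * P w e = 0) : ∃ a, T a = g := by
  have hdis : Disjoint (LinearMap.range T ⊔ Submodule.span ℝ {g}) (LinearMap.range P) := by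
    rw [Submodule.disjoint_def]
    rintro x hx ⟨w, rfl⟩
    obtain ⟨y, ⟨a, rfl⟩, z, hz, hyz⟩ := Submodule.mem_sup.1 hx
    obtain ⟨c, rfl⟩ := Submodule.mem_span_singleton.1 hz
    have h0 : ∑ e, P w e * P w e = 0 := by
      have : ∀ e, P w e * P w e = T a e * P w e + c * (g e * P w e) := by
        intro e
        have := congrFun hyz e
        simp only [Pi.add_apply, Pi.smul_apply, smul_eq_mul] at this
        linear_combination (- P w e) * this
      simp only [this, Finset.sum_add_distrib, ← Finset.mul_sum, h, hg]
      simp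
    rw [Finset.sum_eq_zero_iff_of_nonneg (fun i _ => mul_self_nonneg _)] at h0
    funext e
    simpa using h0 e (Finset.mem_univ e)
  have h1 := Submodule.finrank_add_finrank_le_of_disjoint hdis
  rw [Module.finrank_fintype_fun_eq_card] at h1
  have h2 : LinearMap.range T = LinearMap.range T ⊔ Submodule.span ℝ {g} :=
    Submodule.eq_of_le_of_finrank_le le_sup_left (by omega)
  have : g ∈ LinearMap.range T := by
    rw [h2]; exact Submodule.mem_sup_right (Submodule.mem_span_singleton_self g)
  exact this

theorem ker1 {W A : Type*} [AddCommGroup W] [Module ℝ W] [AddCommGroup A] [Module ℝ A]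
    [FiniteDimensional ℝ A]
    (T : A →ₗ[ℝ] W) (a : A) (h : ∀ x, T x = 0 → ∃ c : ℝ, x = c • a) :
    Module.finrank ℝ A ≤ Module.finrank ℝ (LinearMap.range T) + 1 := by
  rw [← LinearMap.finrank_range_add_finrank_ker T]
  have : LinearMap.ker T ≤ Submodule.span ℝ {a} := by
    intro x hx
    obtain ⟨c, rfl⟩ := h x hx
    exact Submodule.smul_mem _ _ (Submodule.mem_span_singleton_self a)
  have h1 := Submodule.finrank_mono this
  have h2 := finrank_span_le_card (R := ℝ) ({a} : Set A)
  simp at h2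
  omega

/-- the quotient of a type by the orbits of a map -/
def Q {D : Type*} (p : D → D) : Type _ := Quot (fun a b => p a = b)

/-- the quotient map -/
def qm {D : Type*} (p : D → D) (d : D) : Q p := Quot.mk _ d

noncomputable instance {D : Type*} [Finite D] (p : D → D) : Fintype (Q p) :=
  haveI : Finite (Q p) := Finite.of_surjective (Quot.mk _) Quot.mk_surjective
  Fintype.ofFinite _

theorem q2 {D : Type*} [Fintype D] (p : D → D) (hp : ∀ x, p (p x) = x) :
    Fintype.card D ≤ 2 * Fintype.card (Q p) := by
  classical
  have key : ∀ x y : D, qm p x = qm p y → y = x ∨ y = p x := by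
    intro x y h
    have := Quot.eqvGen_exact h
    clear h
    induction this with
    | rel x y h => right; exact h.symm
    | refl x => simp
    | symm x y h ih => grind
    | trans x y z h h' ih ih' => grind
  have := Finset.card_le_mul_card_image (f := qm p) Finset.univ 2 (by
    intro b hb
    obtain ⟨x, -, rfl⟩ := Finset.mem_image.1 hb
    refine (Finset.card_le_card (t := {x, p x}) ?_).trans Finset.card_le_two
    intro y hy
    have := key x y (by simpa using (Finset.mem_filter.1 hy).2.symm)
    simpa using this)
  rw [Finset.card_univ] at this
  exact this.trans (Nat.mul_le_mul_left _ (Finset.card_le_univ _))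

theorem q3 {D : Type*} [Fintype D] (p : D → D) (hp : ∀ x, p (p (p x)) = x) :
    Fintype.card D ≤ 3 * Fintype.card (Q p) := by
  classical
  have key : ∀ x y : D, qm p x = qm p y → y = x ∨ y = p x ∨ y = p (p x) := by
    intro x y h
    have := Quot.eqvGen_exact h
    clear h
    induction this with
    | rel x y h => right; left; exact h.symm
    | refl x => simp
    | symm x y h ih => grind
    | trans x y z h h' ih ih' => grind
  have := Finset.card_le_mul_card_image (f := qm p) Finset.univ 3 (by
    intro b hb
    obtain ⟨x, -, rfl⟩ := Finset.mem_image.1 hb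
    refine (Finset.card_le_card (t := {x, p x, p (p x)}) ?_).trans Finset.card_le_three
    intro y hy
    have := key x y (by simpa using (Finset.mem_filter.1 hy).2.symm)
    simpa using this)
  rw [Finset.card_univ] at this
  exact this.trans (Nat.mul_le_mul_left _ (Finset.card_le_univ _))

variable {V : Type*} [Fintype V] (M : MultiTriangulation V)

/-- the face permutation -/
def phi (d : M.D) : M.D := M.rot (M.rev d)

/-- the boundary map from faces to antisymmetric dart functions -/
def T : (Q (phi M) → ℝ) →ₗ[ℝ] (M.D → ℝ) where
  toFun f := fun e => f (qm (phi M) e) - f (qm (phi M) (M.rev e))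
  map_add' f g := by funext e; simp; ring
  map_smul' c g := by funext e; simp; ring

/-- symmetric dart functions plus coboundaries -/
def P : ((Q M.rev → ℝ) × (V → ℝ)) →ₗ[ℝ] (M.D → ℝ) where
  toFun f := fun e => f.1 (qm M.rev e) + (f.2 (M.head (M.rev e)) - f.2 (M.head e))
  map_add' f g := by funext e; simp; ring
  map_smul' c g := by funext e; simp; ring

theorem const_of (h : V → ℝ) (hh : ∀ e, h (M.head (M.rev e)) = h (M.head e)) (x y : V) :
    h x = h y := by
  induction M.conn x y with
  | refl => rfl
  | tail _ h1 ih => obtain ⟨d, rfl, rfl⟩ := h1; rw [ih, hh]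

theorem mk_rev (e : M.D) : qm M.rev (M.rev e) = qm M.rev e :=
  (Quot.sound (r := fun a b => M.rev a = b) rfl).symm

theorem mk_phi (e : M.D) : qm (phi M) (phi M e) = qm (phi M) e :=
  (Quot.sound (r := fun a b => phi M a = b) rfl).symm

theorem pow_const {X : Type*} (f : M.D → X) (hf : ∀ e, f (M.rot e) = f e) (a b : M.D)
    (h : M.head a = M.head b) : f a = f b := by
  obtain ⟨n, rfl⟩ := M.rot_cyclic a b h
  clear h
  induction n with
  | zero => simp
  | succ n ih => rw [pow_succ', Equiv.Perm.mul_apply, hf, ← ih]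

theorem sum_rev (F : M.D → ℝ) : ∑ e, F (M.rev e) = ∑ e, F e :=
  Equiv.sum_comp (Function.Involutive.toPerm M.rev M.rev_rev) F

theorem sum_phi (F : M.D → ℝ) : ∑ e, F (phi M e) = ∑ e, F e :=
  Equiv.sum_comp ((Function.Involutive.toPerm M.rev M.rev_rev).trans M.rot) F

theorem head_phi (e : M.D) : M.head (phi M e) = M.head (M.rev e) := M.rot_head _

theorem orth (a w) : ∑ e, T M a e * P M w e = 0 := by
  obtain ⟨s, h⟩ := w
  have h1 : ∑ e : M.D, a (qm (phi M) (M.rev e)) *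
        (s (qm M.rev e) + (h (M.head (M.rev e)) - h (M.head e))) =
      ∑ e : M.D, a (qm (phi M) e) *
        (s (qm M.rev e) + (h (M.head e) - h (M.head (M.rev e)))) := by
    rw [← sum_rev M (fun e => a (qm (phi M) e) *
        (s (qm M.rev e) + (h (M.head e) - h (M.head (M.rev e)))))]
    refine Finset.sum_congr rfl fun e _ => ?_
    simp only [M.rev_rev, mk_rev]
  have h2 := sum_phi M (fun e => a (qm (phi M) e) * h (M.head e))
  simp only [mk_phi, head_phi] at h2
  simp only [T, P, LinearMap.coe_mk, AddHom.coe_mk, sub_mul, Finset.sum_sub_distrib]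
  rw [h1]
  simp only [mul_add, mul_sub, Finset.sum_add_distrib, Finset.sum_sub_distrib, h2]
  ring

theorem dims [Nonempty V] : Fintype.card M.D ≤
    Module.finrank ℝ (LinearMap.range (T M)) + Module.finrank ℝ (LinearMap.range (P M)) := by
  obtain ⟨v0⟩ := ‹Nonempty V›
  obtain ⟨d0, -⟩ := M.covers v0
  have hT := ker1 (T M) (fun _ => 1) (by
    intro x hx
    have hr : ∀ e, x (qm (phi M) (M.rev e)) = x (qm (phi M) e) := by
      intro e
      have := congrFun hx e
      simp only [T, LinearMap.coe_mk, AddHom.coe_mk, Pi.zero_apply] at this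
      linarith
    have hrot : ∀ e, x (qm (phi M) (M.rot e)) = x (qm (phi M) e) := by
      intro e
      have : qm (phi M) (M.rot e) = qm (phi M) (M.rev e) := by
        have := mk_phi M (M.rev e)
        rwa [show phi M (M.rev e) = M.rot e by simp only [phi, M.rev_rev]] at this
      rw [← hr e, this]
    choose c hc using M.covers
    have hv : ∀ e, x (qm (phi M) (c (M.head e))) = x (qm (phi M) e) := fun e =>
      pow_const M (fun e => x (qm (phi M) e)) hrot _ _ (hc _)
    have := const_of M (fun v => x (qm (phi M) (c v))) (by
      intro e; simp only [hv, hr])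
    refine ⟨x (qm (phi M) d0), ?_⟩
    funext q
    induction q using Quot.ind with
    | mk e =>
      change x (qm (phi M) e) = x (qm (phi M) d0) * 1
      rw [← hv e, ← hv d0, mul_one]
      exact this _ _)
  have hP := ker1 (P M) (0, fun _ => 1) (by
    rintro ⟨s, h⟩ hx
    have h1 : ∀ e : M.D, s (qm M.rev e) + (h (M.head (M.rev e)) - h (M.head e)) = 0 :=
      fun e => congrFun hx e
    have h2 : ∀ e : M.D, s (qm M.rev e) = 0 := by
      intro e
      have a := h1 e
      have b := h1 (M.rev e)
      rw [mk_rev, M.rev_rev] at b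
      linarith
    have h3 := const_of M h (by intro e; have := h1 e; rw [h2] at this; linarith)
    refine ⟨h v0, ?_⟩
    ext q
    · induction q using Quot.ind with
      | mk e =>
        change s (qm M.rev e) = h v0 * 0
        rw [h2, mul_zero]
    · simpa using h3 _ _)
  rw [Module.finrank_fintype_fun_eq_card] at hT
  rw [Module.finrank_prod, Module.finrank_fintype_fun_eq_card,
    Module.finrank_fintype_fun_eq_card] at hP
  have a := q2 M.rev M.rev_rev
  have b := q3 (phi M) M.face_tri
  have c := M.euler
  omega

theorem potential (d d' : M.D) (h1 : M.head d = M.head d')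
    (h2 : M.head (M.rev d) = M.head (M.rev d')) (hne : d ≠ d') :
    ∃ f : M.D → ℝ, (∀ e, f (M.rot (M.rev e)) = f e) ∧
      (∀ e, e ≠ d → e ≠ d' → e ≠ M.rev d → e ≠ M.rev d' → f (M.rev e) = f e) ∧
      f d = f (M.rev d) + 1 ∧ f (M.rev d') = f d' + 1 := by
  classical
  have : Nonempty V := ⟨M.head d⟩
  obtain ⟨f, hf⟩ := lin (T M) (P M) (orth M) (dims M)
    (fun e => (if e = d then 1 else 0) - (if e = M.rev d then 1 else 0)
      - (if e = d' then 1 else 0) + (if e = M.rev d' then 1 else 0)) (by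
    rintro ⟨s, h⟩
    simp only [P, LinearMap.coe_mk, AddHom.coe_mk, add_mul, sub_mul, Finset.sum_add_distrib,
      Finset.sum_sub_distrib, ite_mul, one_mul, zero_mul, Finset.sum_ite_eq', Finset.mem_univ,
      if_true, mk_rev, M.rev_rev, h1, h2]
    ring)
  have hf' : ∀ e, f (qm (phi M) e) - f (qm (phi M) (M.rev e)) = _ := fun e => congrFun hf e
  have n1 : d ≠ M.rev d := fun h => M.no_loops d (congrArg M.head h.symm)
  have n2 : d' ≠ M.rev d' := fun h => M.no_loops d' (congrArg M.head h.symm)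
  have n3 : d ≠ M.rev d' := fun h => M.no_loops d' (by rw [← h, h1])
  have n4 : d' ≠ M.rev d := fun h => M.no_loops d (by rw [← h, h1])
  refine ⟨fun e => f (qm (phi M) e), fun e => congrArg f (mk_phi M e), ?_, ?_, ?_⟩
  · intro e a b c d
    have := hf' e
    simp only [a, b, c, d, if_false] at this
    linarith
  · have := hf' d
    simp only [hne, n1, n3, if_false, if_true] at this
    linarith
  · have := hf' d'
    simp only [hne.symm, n2, n4, if_false, if_true] at this
    linarith

/-! ### components -/

theorem tri (e : M.D) : ∃ t, M.head t = M.head (M.rev (M.rot e)) ∧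
    M.head (M.rev t) = M.head (M.rev e) := by
  refine ⟨M.rot (M.rev (M.rot e)), M.rot_head _, ?_⟩
  have := M.face_tri (M.rev e)
  rw [M.rev_rev] at this
  rw [← M.rot_head, this]

theorem tri_ne (e : M.D) : M.head (M.rev (M.rot e)) ≠ M.head (M.rev e) := by
  obtain ⟨t, h1, h2⟩ := tri M e
  rw [← h1, ← h2]; exact (M.no_loops t).symm

/-- `x`, `y` lie in the same component of the induced graph on `S` -/
def R (S : Set V) (x y : V) : Prop :=
  ∃ (hx : x ∈ S) (hy : y ∈ S), (M.graph.induce S).Reachable ⟨x, hx⟩ ⟨y, hy⟩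

variable {M} {S : Set V}

theorem R.symm {x y : V} (h : R M S x y) : R M S y x := by
  obtain ⟨a, b, c⟩ := h; exact ⟨b, a, c.symm⟩

theorem R.trans {x y z : V} (h : R M S x y) (h' : R M S y z) : R M S x z := by
  obtain ⟨a, b, c⟩ := h; obtain ⟨a', b', c'⟩ := h'; exact ⟨a, b', c.trans c'⟩

theorem R.rfl' {x : V} (h : x ∈ S) : R M S x x := ⟨h, h, SimpleGraph.Reachable.refl _⟩

theorem R.dart (e : M.D) (h : M.head e ∈ S) (h' : M.head (M.rev e) ∈ S) :
    R M S (M.head e) (M.head (M.rev e)) := by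
  refine ⟨h, h', SimpleGraph.Adj.reachable ?_⟩
  simp only [SimpleGraph.comap_adj, MultiTriangulation.graph, SimpleGraph.fromRel_adj]
  exact ⟨(M.no_loops e).symm, Or.inl ⟨e, rfl, rfl⟩⟩

theorem R.tri (e : M.D) (h : M.head (M.rev e) ∈ S) (h' : M.head (M.rev (M.rot e)) ∈ S) :
    R M S (M.head (M.rev e)) (M.head (M.rev (M.rot e))) := by
  obtain ⟨t, h1, h2⟩ := MTaux.tri M e
  rw [← h2] at h ⊢
  rw [← h1] at h' ⊢
  exact (R.dart t h' h).symm

theorem pow_head (n : ℕ) (d : M.D) : M.head ((M.rot ^ n) d) = M.head d := by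
  induction n with
  | zero => simp
  | succ n ih => rw [pow_succ', Equiv.Perm.mul_apply, M.rot_head, ih]

theorem around {a b : V} (hS : ∀ x, x ≠ a → x ≠ b → x ∈ S) (d : M.D) (ha : M.head d = a)
    (hb : M.head (M.rev d) = b) (n : ℕ) (hn : M.head (M.rev ((M.rot ^ n) d)) ≠ b) :
    ∃ d0, M.head d0 = a ∧ M.head (M.rev d0) = b ∧
      R M S (M.head (M.rev (M.rot d0))) (M.head (M.rev ((M.rot ^ n) d))) := by
  have hm : ∀ k, M.head (M.rev ((M.rot ^ k) d)) ≠ b → M.head (M.rev ((M.rot ^ k) d)) ∈ S := by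
    intro k hk
    refine hS _ ?_ hk
    have := M.no_loops ((M.rot ^ k) d)
    rwa [pow_head, ha] at this
  induction n with
  | zero => exact absurd hb (by simpa using hn)
  | succ n ih =>
    have hs := hm _ hn
    rw [pow_succ', Equiv.Perm.mul_apply] at hn hs ⊢
    by_cases h : M.head (M.rev ((M.rot ^ n) d)) = b
    · exact ⟨(M.rot ^ n) d, by rw [pow_head, ha], h, R.rfl' hs⟩
    · obtain ⟨d0, h1, h2, h3⟩ := ih h
      exact ⟨d0, h1, h2, h3.trans (R.tri _ (hm _ h) hs)⟩

theorem around' {a b : V} (hS : ∀ x, x ≠ a → x ≠ b → x ∈ S)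
    (hno : ∀ d, M.head d = a → M.head (M.rev d) ≠ b) (e e' : M.D) (he : M.head e = a)
    (he' : M.head e' = a) : R M S (M.head (M.rev e)) (M.head (M.rev e')) := by
  have hm : ∀ k, M.head k = a → M.head (M.rev k) ∈ S := by
    intro k hk
    exact hS _ (hk ▸ M.no_loops k) (hno _ hk)
  obtain ⟨n, rfl⟩ := M.rot_cyclic e e' (he.trans he'.symm)
  clear he'
  induction n with
  | zero => exact R.rfl' (hm _ he)
  | succ n ih =>
    rw [pow_succ', Equiv.Perm.mul_apply]
    exact ih.trans (R.tri _ (hm _ (by rw [pow_head, he])) (hm _ (by rw [M.rot_head, pow_head, he])))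

theorem touches {u v : V} (hS : S = {x | x ≠ u ∧ x ≠ v}) (x : V) :
    x = u ∨ x = v ∨ ∃ e, (M.head e = u ∨ M.head e = v) ∧ R M S (M.head (M.rev e)) x := by
  induction M.conn x u using Relation.ReflTransGen.head_induction_on with
  | refl => simp
  | head h _ ih =>
    obtain ⟨d, rfl, rfl⟩ := h
    by_cases h1 : M.head d = u
    · exact Or.inl h1
    by_cases h2 : M.head d = v
    · exact Or.inr (Or.inl h2)
    have hdS : M.head d ∈ S := by rw [hS]; exact ⟨h1, h2⟩
    right; right
    rcases ih with ih | ih | ⟨e, h3, h4⟩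
    · exact ⟨M.rev d, Or.inl ih, by rw [M.rev_rev]; exact R.rfl' hdS⟩
    · exact ⟨M.rev d, Or.inr ih, by rw [M.rev_rev]; exact R.rfl' hdS⟩
    · exact ⟨e, h3, h4.trans (R.dart d hdS h4.2.1).symm⟩

theorem one_comp {u v : V} (huv : u ≠ v) (hS : S = {x | x ≠ u ∧ x ≠ v})
    (hno : ∀ d, M.head d = u → M.head (M.rev d) ≠ v) (x y : V) (hx : x ∈ S) (hy : y ∈ S) :
    R M S x y := by
  have hS1 : ∀ x, x ≠ u → x ≠ v → x ∈ S := by rw [hS]; exact fun x a b => ⟨a, b⟩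
  have hS2 : ∀ x, x ≠ v → x ≠ u → x ∈ S := by rw [hS]; exact fun x a b => ⟨b, a⟩
  have huS : u ∉ S := by rw [hS]; exact fun h => h.1 rfl
  have hvS : v ∉ S := by rw [hS]; exact fun h => h.2 rfl
  have hno' : ∀ d, M.head d = v → M.head (M.rev d) ≠ u := by
    intro d h1 h2
    exact hno (M.rev d) h2 (by rw [M.rev_rev]; exact h1)
  obtain ⟨p, hp⟩ := M.covers u
  obtain ⟨q, hq⟩ := M.covers v
  have key : ∀ z, z = u ∨ R M S z (M.head (M.rev p)) ∨
      R M S (M.head (M.rev p)) (M.head (M.rev q)) := by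
    intro z
    induction M.conn u z with
    | refl => simp
    | tail _ h ih =>
      obtain ⟨d, rfl, rfl⟩ := h
      rcases ih with ih | ih | ih
      · exact Or.inr (Or.inl (around' hS1 hno _ _ ih hp))
      · by_cases h1 : M.head (M.rev d) = u
        · exact Or.inl h1
        by_cases h2 : M.head (M.rev d) = v
        · have := around' hS2 hno' (M.rev d) q h2 hq
          rw [M.rev_rev] at this
          exact Or.inr (Or.inr (ih.symm.trans this))
        · exact Or.inr (Or.inl ((R.dart d ih.1 (hS1 _ h1 h2)).symm.trans ih))
      · exact Or.inr (Or.inr ih)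
  have hpq : R M S (M.head (M.rev p)) (M.head (M.rev q)) := by
    rcases key v with h | h | h
    · exact absurd h.symm huv
    · exact absurd h.1 hvS
    · exact h
  have all : ∀ x ∈ S, R M S x (M.head (M.rev p)) := by
    intro x hx
    rcases touches (M := M) hS x with rfl | rfl | ⟨e, h | h, h'⟩
    · exact absurd hx huS
    · exact absurd hx hvS
    · exact h'.symm.trans (around' hS1 hno _ _ h hp)
    · exact h'.symm.trans ((around' hS2 hno' _ _ h hq).trans hpq.symm)
  exact (all x hx).trans (all y hy).symm

theorem surj {u v : V} (hS : S = {x | x ≠ u ∧ x ≠ v})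
    (d : M.D) (hu : M.head d = u) (hv : M.head (M.rev d) = v) (x : V) (hx : x ∈ S) :
    ∃ d0, M.head d0 = u ∧ M.head (M.rev d0) = v ∧ R M S (M.head (M.rev (M.rot d0))) x := by
  have hS1 : ∀ x, x ≠ u → x ≠ v → x ∈ S := by rw [hS]; exact fun x a b => ⟨a, b⟩
  have hS2 : ∀ x, x ≠ v → x ≠ u → x ∈ S := by rw [hS]; exact fun x a b => ⟨b, a⟩
  have huS : u ∉ S := by rw [hS]; exact fun h => h.1 rfl
  have hvS : v ∉ S := by rw [hS]; exact fun h => h.2 rfl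
  have base : ∀ e, M.head e = u → R M S (M.head (M.rev e)) x →
      ∃ d0, M.head d0 = u ∧ M.head (M.rev d0) = v ∧ R M S (M.head (M.rev (M.rot d0))) x := by
    intro e he hr
    obtain ⟨n, rfl⟩ := M.rot_cyclic d e (hu.trans he.symm)
    obtain ⟨d0, h1, h2, h3⟩ := around hS1 d hu hv n (fun h => hvS (h ▸ hr.1))
    exact ⟨d0, h1, h2, h3.trans hr⟩
  rcases touches (M := M) hS x with rfl | rfl | ⟨e, h | h, h'⟩
  · exact absurd hx huS
  · exact absurd hx hvS
  · exact base e h h'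
  · obtain ⟨n, rfl⟩ := M.rot_cyclic (M.rev d) e (hv.trans h.symm)
    obtain ⟨d0, h1, h2, h3⟩ := around hS2 (M.rev d) hv (by rw [M.rev_rev, hu]) n
      (fun h => huS (h ▸ h'.1))
    obtain ⟨t, t1, t2⟩ := MTaux.tri M d0
    refine base (M.rev t) (by rw [t2, h2]) ?_
    rw [M.rev_rev, t1]
    exact h3.trans h'

theorem inj {u v : V} (hS : S = {x | x ≠ u ∧ x ≠ v})
    (d d' : M.D) (hu : M.head d = u) (hv : M.head (M.rev d) = v)
    (hu' : M.head d' = u) (hv' : M.head (M.rev d') = v)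
    (hR : R M S (M.head (M.rev (M.rot d))) (M.head (M.rev (M.rot d')))) : d = d' := by
  by_contra hne
  obtain ⟨f, hphi, hsym, hd, hd'⟩ := potential M d d' (hu.trans hu'.symm) (hv.trans hv'.symm) hne
  have hrot : ∀ e, f (M.rot e) = f (M.rev e) := by
    intro e
    have := hphi (M.rev e)
    rwa [M.rev_rev] at this
  have hsym' : ∀ e, M.head e ∈ S → f (M.rev e) = f e := by
    intro e he
    rw [hS] at he
    refine hsym e ?_ ?_ ?_ ?_ <;> rintro rfl
    · exact he.1 hu
    · exact he.1 hu'
    · exact he.2 hv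
    · exact he.2 hv'
  have hstar : ∀ e e', M.head e ∈ S → M.head e = M.head e' → f e = f e' := by
    intro e e' he h
    obtain ⟨n, rfl⟩ := M.rot_cyclic e e' h
    clear h
    induction n with
    | zero => simp
    | succ n ih =>
      rw [pow_succ', Equiv.Perm.mul_apply, hrot, hsym' _ (by rwa [pow_head]), ih]
  have hcol : ∀ x y : S, (M.graph.induce S).Reachable x y →
      ∀ e e', M.head e = x → M.head e' = y → f e = f e' := by
    rintro x y ⟨w⟩
    induction w with
    | nil =>
      intro e e' h h'
      exact hstar e e' (h ▸ Subtype.property _) (h.trans h'.symm)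
    | cons hadj _ ih =>
      intro e e' h h'
      simp only [SimpleGraph.comap_adj, MultiTriangulation.graph, SimpleGraph.fromRel_adj] at hadj
      obtain ⟨-, ⟨t, t1, t2⟩ | ⟨t, t1, t2⟩⟩ := hadj
      · rw [← ih (M.rev t) e' t2 h', hsym' t (t1 ▸ Subtype.property _)]
        exact hstar _ _ (h ▸ Subtype.property _) (h.trans t1.symm)
      · rw [← ih t e' t1 h', ← hsym' t (t1 ▸ Subtype.property _)]
        exact hstar _ _ (h ▸ Subtype.property _) (h.trans t2.symm)
  obtain ⟨hx, hy, hr⟩ := hR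
  have h1 := hcol _ _ hr (M.rot (M.rev (M.rot d))) (M.rot (M.rev (M.rot d')))
    (M.rot_head _) (M.rot_head _)
  rw [hphi, hphi, hrot, hrot] at h1
  classical
  have hex : ∃ n : ℕ, (M.rot ^ n) d = d' := M.rot_cyclic d d' (hu.trans hu'.symm)
  have huv : u ≠ v := by
    have := M.no_loops d
    rw [hu, hv] at this
    exact this.symm
  have hround : ∀ n : ℕ, n < Nat.find hex → f ((M.rot ^ (n + 1)) d) = f (M.rev d) := by
    intro n
    induction n with
    | zero => intro _; simpa using hrot d
    | succ n ih =>
      intro hn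
      have hmin := Nat.find_min hex hn
      have hh : M.head ((M.rot ^ (n + 1)) d) = u := by rw [pow_head, hu]
      rw [pow_succ', Equiv.Perm.mul_apply, hrot]
      by_cases hc : (M.rot ^ (n + 1)) d = d
      · rw [hc]
      · rw [hsym _ hc hmin (fun h => huv (by rw [← hh, h, hv]))
          (fun h => huv (by rw [← hh, h, hv']))]
        exact ih (by omega)
  have hspec := Nat.find_spec hex
  have hpos : Nat.find hex ≠ 0 := by
    intro h0
    rw [h0] at hspec
    exact hne (by simpa using hspec)
  have h2 := hround (Nat.find hex - 1) (by omega)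
  rw [Nat.sub_add_cancel (by omega), hspec] at h2
  linarith

end MTaux

/-- In a multi-triangulated planar graph, `{u,v}` is a cutting pair with exactly `L`
cut-components if and only if `(u,v)` is an edge of multiplicity `L ≥ 2` (there are
exactly `L` parallel darts from `u` to `v`). -/
theorem stmt16 {V : Type*} [Fintype V] (M : MultiTriangulation V) (u v : V)
    (huv : u ≠ v) (L : ℕ) :
    (¬ (M.graph.induce {x | x ≠ u ∧ x ≠ v}).Connected ∧
      Nat.card ((M.graph.induce {x | x ≠ u ∧ x ≠ v}).ConnectedComponent) = L)
    ↔ (2 ≤ L ∧ Nat.card {d : M.D // M.head d = u ∧ M.head (M.rev d) = v} = L) := by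
  classical
  set S : Set V := {x | x ≠ u ∧ x ≠ v} with hS
  have hin : ∀ d : M.D, M.head d = u → M.head (M.rev d) = v → M.head (M.rev (M.rot d)) ∈ S := by
    intro d h1 h2
    refine ⟨?_, ?_⟩
    · have := M.no_loops (M.rot d)
      rwa [M.rot_head, h1] at this
    · have := MTaux.tri_ne M d
      rwa [h2] at this
  have hne : S.Nonempty := by
    obtain ⟨d, hd⟩ := M.covers u
    by_cases h : M.head (M.rev d) = v
    · exact ⟨_, hin d hd h⟩
    · exact ⟨_, hd ▸ M.no_loops d, h⟩
  have : Nonempty S := hne.to_subtype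
  by_cases hm : ∃ d, M.head d = u ∧ M.head (M.rev d) = v
  · obtain ⟨d, hu, hv⟩ := hm
    let F : {d : M.D // M.head d = u ∧ M.head (M.rev d) = v} →
        (M.graph.induce S).ConnectedComponent := fun e =>
      (M.graph.induce S).connectedComponentMk ⟨_, hin e.1 e.2.1 e.2.2⟩
    have hF : Function.Bijective F := by
      constructor
      · intro a b hab
        exact Subtype.ext (MTaux.inj hS a.1 b.1 a.2.1 a.2.2 b.2.1 b.2.2
          ⟨_, _, SimpleGraph.ConnectedComponent.exact hab⟩)
      · intro c
        induction c using SimpleGraph.ConnectedComponent.ind with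
        | h x =>
          obtain ⟨d0, h1, h2, _, _, h3⟩ := MTaux.surj (M := M) hS d hu hv x.1 x.2
          exact ⟨⟨d0, h1, h2⟩, SimpleGraph.ConnectedComponent.sound h3⟩
    have hcard := Nat.card_eq_of_bijective F hF
    rw [hcard]
    have hfin : Finite (M.graph.induce S).ConnectedComponent := Finite.of_surjective F hF.2
    refine and_congr_left ?_
    rintro rfl
    constructor
    · intro hnc
      by_contra hlt
      apply hnc
      have hs : Subsingleton (M.graph.induce S).ConnectedComponent :=
        Finite.card_le_one_iff_subsingleton.1 (by omega)
      exact { preconnected := fun x y => SimpleGraph.ConnectedComponent.exact (Subsingleton.elim _ _) }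
    · intro h2 hc
      have hs := hc.preconnected.subsingleton_connectedComponent
      have := Finite.card_le_one_iff_subsingleton.2 hs
      omega
  · push Not at hm
    constructor
    · rintro ⟨h, -⟩
      refine absurd ?_ h
      exact { preconnected := fun x y =>
        (MTaux.one_comp huv hS hm x.1 y.1 x.2 y.2).2.2 }
    · rintro ⟨h2, h⟩
      have : IsEmpty {d : M.D // M.head d = u ∧ M.head (M.rev d) = v} :=
        ⟨fun e => hm e.1 e.2.1 e.2.2⟩
      simp at h
      omega
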